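/- arXiv:2402.07577 — 3 statements merged into one kernel-verified Lean document; each statement's English description precedes it below -/
import Mathlib

section
/- Let E be a finite-dimensional real inner product space, let M ≥ 1, and let L₁, …, L_M : E → ℝ be functions each differentiable at a point θ* ∈ E. Suppose θ* is a local weak Pareto optimum, i.e. there exists a neighborhood U of θ* such that no θ ∈ U satisfies L_m(θ) < L_m(θ*) simultaneously for every m ∈ {1, …, M}. Then there exist nonnegative reals α₁, …, α_M with α₁ + ⋯ + α_M = 1 such that α₁ ∇L₁(θ*) + ⋯ + α_M ∇L_M(θ*) = 0. -/
/-!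
The convex combinations of the gradients form a compact convex set `K`. If `0 ∉ K`, Hahn–Banach
separation provides a linear functional that is positive on `K`; by Riesz representation it is
`⟪w, ·⟫` for some `w`, so that `⟪w, ∇L_m(θ*)⟫ > 0` for every `m`. Then `-w` is a descent direction
common to all objectives, and `θ* - t w` with small `t > 0` contradicts Pareto optimality.
-/

open RealInnerProductSpace

/-- A direction along which the directional derivative is negative is a descent direction. -/
lemma eventually_lt_of_inner_gradient_neg {E : Type*} [NormedAddCommGroup E]
    [InnerProductSpace ℝ E] [CompleteSpace E] {f : E → ℝ} {x v : E}
    (hf : DifferentiableAt ℝ f x) (hv : ⟪gradient f x, v⟫ < 0) :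
    ∀ᶠ t : ℝ in nhdsWithin 0 (Set.Ioi 0), f (x + t • v) < f x := by
  have hd : HasLineDerivAt ℝ f ⟪gradient f x, v⟫ x v := by
    simpa using hf.hasGradientAt.hasFDerivAt.hasLineDerivAt v
  filter_upwards [hd.tendsto_slope_zero_right.eventually (gt_mem_nhds hv), self_mem_nhdsWithin]
    with t ht htpos
  have htpos : 0 < t := htpos
  rw [smul_eq_mul] at ht
  have := neg_of_mul_neg_right ht (inv_pos.2 htpos).le
  linarith

/-- If `θ*` is a local weak Pareto optimum of `M ≥ 1` objectives `L₁, …, L_M`, each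
differentiable at `θ*`, then some convex combination of the gradients vanishes. -/
theorem stmt_0 {E : Type*} [NormedAddCommGroup E] [InnerProductSpace ℝ E]
    [FiniteDimensional ℝ E] (M : ℕ) (hM : 1 ≤ M) (L : Fin M → E → ℝ) (θstar : E)
    (hdiff : ∀ m, DifferentiableAt ℝ (L m) θstar)
    (hpareto : ∃ U ∈ nhds θstar, ∀ θ ∈ U, ¬ (∀ m, L m θ < L m θstar)) :
    ∃ α : Fin M → ℝ, (∀ m, 0 ≤ α m) ∧ (∑ m, α m) = 1 ∧
      (∑ m, α m • gradient (L m) θstar) = 0 := by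
  obtain ⟨U, hU, hpar⟩ := hpareto
  set g : Fin M → E := fun m => gradient (L m) θstar with hg
  set T : (Fin M → ℝ) →ₗ[ℝ] E := Fintype.linearCombination ℝ g with hT
  set K : Set E := T '' stdSimplex ℝ (Fin M) with hK
  have hKconv : Convex ℝ K := (convex_stdSimplex ℝ (Fin M)).linear_image T
  have hKclosed : IsClosed K :=
    ((isCompact_stdSimplex ℝ (Fin M)).image T.continuous_of_finiteDimensional).isClosed
  by_cases h0 : (0 : E) ∈ K
  · obtain ⟨α, ⟨hα, hsum⟩, hα0⟩ := h0
    exact ⟨α, hα, hsum, by simpa [hT, Fintype.linearCombination_apply] using hα0⟩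
  exfalso
  obtain ⟨f, u, hu, hf⟩ := geometric_hahn_banach_point_closed hKconv hKclosed h0
  rw [map_zero] at hu
  set w : E := (InnerProductSpace.toDual ℝ E).symm f with hw
  have hpos : ∀ m, 0 < ⟪w, g m⟫ := fun m => by
    rw [hw, InnerProductSpace.toDual_symm_apply]
    exact hu.trans (hf _ ⟨Pi.single m 1, single_mem_stdSimplex ℝ m, by
      simp [hT]⟩)
  have hdesc : ∀ᶠ t : ℝ in nhdsWithin 0 (Set.Ioi 0), ∀ m, L m (θstar + t • -w) < L m θstar :=
    Filter.eventually_all.2 fun m => eventually_lt_of_inner_gradient_neg (hdiff m) (by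
      rw [inner_neg_right, real_inner_comm]
      exact neg_neg_of_pos (hpos m))
  have hcont : Filter.Tendsto (fun t : ℝ => θstar + t • -w) (nhdsWithin 0 (Set.Ioi 0))
      (nhds θstar) := by
    have hc : Continuous fun t : ℝ => θstar + t • -w := by fun_prop
    simpa using (hc.tendsto 0).mono_left nhdsWithin_le_nhds
  obtain ⟨t, ht, htU⟩ := (hdesc.and (hcont.eventually hU)).exists
  exact hpar _ htU ht
end

section
/- Let E be a finite-dimensional real inner product space and let L₁, L₂ : E → ℝ be functions each differentiable at a point θ* ∈ E. Suppose θ* is a local weak Pareto optimum of (L₁, L₂), i.e. there exists a neighborhood U of θ* such that no θ ∈ U satisfies both L₁(θ) < L₁(θ*) and L₂(θ) < L₂(θ*). Then there exists α ∈ [0, 1] such that α ∇L₁(θ*) + (1 − α) ∇L₂(θ*) = 0. -/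
/-!
If no convex combination of the two gradients vanishes, the origin lies outside the segment joining
them, so Hahn–Banach strictly separates it from this segment by a functional, represented by some
`d` with `⟪d, ∇Lᵢ(θ*)⟫ > 0` for both `i`. Both objectives then strictly decrease along
`θ* - t • d` for small `t > 0`, contradicting local weak Pareto optimality.
-/

open RealInnerProductSpace

lemma eventually_lt_of_inner_gradient_pos {E : Type*} [NormedAddCommGroup E]
    [InnerProductSpace ℝ E] [CompleteSpace E] {L : E → ℝ} {x d : E}
    (hL : DifferentiableAt ℝ L x) (hd : 0 < ⟪d, gradient L x⟫) :
    ∀ᶠ t : ℝ in nhdsWithin 0 (Set.Ioi 0), L (x + t • -d) < L x := by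
  have hderiv : HasDerivAt (fun t : ℝ => L (x + t • -d)) (fderiv ℝ L x (-d)) 0 :=
    hL.hasFDerivAt.hasLineDerivAt (-d)
  have hneg : fderiv ℝ L x (-d) < 0 := by
    rw [← inner_gradient_left, inner_neg_right, real_inner_comm]
    linarith
  filter_upwards [hderiv.tendsto_slope_zero_right.eventually (gt_mem_nhds hneg),
    self_mem_nhdsWithin] with t ht ht0
  have ht0 : 0 < t := ht0
  simp only [zero_add, zero_smul, add_zero, smul_eq_mul] at ht
  have := neg_of_mul_neg_right ht (inv_nonneg.2 ht0.le)
  linarith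

/-- If `θ*` is a local weak Pareto optimum of `(L₁, L₂)`, both differentiable at `θ*`,
then there is `α ∈ [0, 1]` with `α ∇L₁(θ*) + (1 − α) ∇L₂(θ*) = 0`. -/
theorem stmt_1 {E : Type*} [NormedAddCommGroup E] [InnerProductSpace ℝ E]
    [FiniteDimensional ℝ E] (L₁ L₂ : E → ℝ) (θstar : E)
    (hdiff₁ : DifferentiableAt ℝ L₁ θstar) (hdiff₂ : DifferentiableAt ℝ L₂ θstar)
    (hpareto : ∃ U ∈ nhds θstar, ∀ θ ∈ U, ¬ (L₁ θ < L₁ θstar ∧ L₂ θ < L₂ θstar)) :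
    ∃ α ∈ Set.Icc (0 : ℝ) 1,
      α • gradient L₁ θstar + (1 - α) • gradient L₂ θstar = 0 := by
  obtain ⟨U, hU, hpar⟩ := hpareto
  by_cases h0 : (0 : E) ∈ segment ℝ (gradient L₁ θstar) (gradient L₂ θstar)
  · obtain ⟨a, b, ha, hb, hab, h⟩ := h0
    obtain rfl : b = 1 - a := by linarith
    exact ⟨a, ⟨ha, by linarith⟩, h⟩
  exfalso
  have hclosed : IsClosed (segment ℝ (gradient L₁ θstar) (gradient L₂ θstar)) := by
    rw [segment_eq_image_lineMap]
    exact (isCompact_Icc.image AffineMap.lineMap_continuous).isClosed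
  obtain ⟨f, u, hf0, hf⟩ :=
    geometric_hahn_banach_point_closed (convex_segment _ _) hclosed h0
  rw [map_zero] at hf0
  obtain ⟨d, rfl⟩ := (InnerProductSpace.toDual ℝ E).surjective f
  have h₁ : 0 < ⟪d, gradient L₁ θstar⟫ := hf0.trans (hf _ (left_mem_segment ℝ _ _))
  have h₂ : 0 < ⟪d, gradient L₂ θstar⟫ := hf0.trans (hf _ (right_mem_segment ℝ _ _))
  have hcont : Filter.Tendsto (fun t : ℝ => θstar + t • -d) (nhdsWithin 0 (Set.Ioi 0))
      (nhds θstar) := by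
    have : Continuous fun t : ℝ => θstar + t • -d := by fun_prop
    exact (this.tendsto' 0 θstar (by simp)).mono_left nhdsWithin_le_nhds
  obtain ⟨t, ⟨hd₁, hd₂⟩, htU⟩ := ((eventually_lt_of_inner_gradient_pos hdiff₁ h₁).and
    (eventually_lt_of_inner_gradient_pos hdiff₂ h₂)).and (hcont.eventually hU) |>.exists
  exact hpar _ htU ⟨hd₁, hd₂⟩
end

section
/- Let E be a real inner product space and let g₁, g₂ ∈ E with g₁ ≠ g₂. Define f : ℝ → ℝ by f(α) = ‖α g₁ + (1 − α) g₂‖², let α̂ = min(1, max(0, ⟪g₂, g₂ − g₁⟫ / ‖g₁ − g₂‖²)), and let d = α̂ g₁ + (1 − α̂) g₂. If 0 < α̂ and α̂ < 1, then ⟪g₁, d⟫ = ⟪g₂, d⟫ = ‖d‖². -/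
/-! An interior `αhat` is the critical point of the quadratic `f`, and vanishing of `f'` there says
that `d` is orthogonal to `g₁ - g₂`, so `⟪g₁, d⟫ = ⟪g₂, d⟫`. As `d` is an affine combination of
`g₁` and `g₂`, pairing it with itself shows that this common value is `‖d‖ ^ 2`. -/

open RealInnerProductSpace

/-- With `α̂ = min(1, max(0, ⟪g₂, g₂ − g₁⟫ / ‖g₁ − g₂‖²))` and `d = α̂ g₁ + (1 − α̂) g₂`,
if `0 < α̂ < 1` then `⟪g₁, d⟫ = ⟪g₂, d⟫ = ‖d‖²`. -/
theorem stmt_9 {E : Type*} [NormedAddCommGroup E] [InnerProductSpace ℝ E]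
    (g₁ g₂ : E) (hne : g₁ ≠ g₂) (f : ℝ → ℝ)
    (hf : ∀ α, f α = ‖α • g₁ + (1 - α) • g₂‖ ^ 2)
    (αhat : ℝ) (hαhat : αhat = min 1 (max 0 (⟪g₂, g₂ - g₁⟫ / ‖g₁ - g₂‖ ^ 2)))
    (d : E) (hdd : d = αhat • g₁ + (1 - αhat) • g₂)
    (h0 : 0 < αhat) (h1 : αhat < 1) :
    ⟪g₁, d⟫ = ‖d‖ ^ 2 ∧ ⟪g₂, d⟫ = ‖d‖ ^ 2 := by
  -- An interior value of the clamp is the unclamped quotient.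
  have hq : αhat = ⟪g₂, g₂ - g₁⟫ / ‖g₁ - g₂‖ ^ 2 := by
    rcases min_choice 1 (max 0 (⟪g₂, g₂ - g₁⟫ / ‖g₁ - g₂‖ ^ 2)) with h | h
    · linarith
    · rcases max_choice 0 (⟪g₂, g₂ - g₁⟫ / ‖g₁ - g₂‖ ^ 2) with h' | h' <;> linarith
  have hpos : ‖g₁ - g₂‖ ^ 2 ≠ 0 :=
    pow_ne_zero 2 (norm_ne_zero_iff.mpr (sub_ne_zero.mpr hne))
  -- Stationarity of `f` at `αhat`: `d` is orthogonal to `g₁ - g₂`.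
  have horth : ⟪g₁, d⟫ = ⟪g₂, d⟫ := by
    rw [eq_div_iff hpos, ← real_inner_self_eq_norm_sq] at hq
    simp only [inner_sub_left, inner_sub_right, real_inner_comm g₁ g₂] at hq
    simp only [hdd, inner_add_right, inner_smul_right, real_inner_comm g₁ g₂]
    linarith
  have hnorm : ‖d‖ ^ 2 = αhat * ⟪g₁, d⟫ + (1 - αhat) * ⟪g₂, d⟫ := by
    rw [← real_inner_self_eq_norm_sq]
    nth_rw 1 [hdd]
    simp only [inner_add_left, real_inner_smul_left]
  constructor
  · rw [hnorm, ← horth]; ring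
  · rw [hnorm, horth]; ring
end
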